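/- arXiv:2105.13615 — 2 statements merged into one kernel-verified Lean document; each statement's English description precedes it below -/
import Mathlib

section
/- If hyperplanes h_1,…,h_k with normals v_1,…,v_k ∈ ℝ^n and constants μ_1,…,μ_k form an essential cover of the n-dimensional hypercube, then for every i ∈ [k] the number of nonzero coordinates of v_i satisfies ‖v_i‖_0 < 2k. -/
open scoped Classical

/-- Hyperplanes with normals `v i` and constants `μ i` form an essential cover of the
`n`-dimensional hypercube `{-1,1}^n`. -/
def IsEssentialCover (n k : ℕ) (v : Fin k → Fin n → ℝ) (μ : Fin k → ℝ) : Prop :=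
  (∀ i, v i ≠ 0) ∧
  (∀ x : Fin n → ℝ, (∀ j, x j = 1 ∨ x j = -1) → ∃ i, ∑ j, x j * v i j = μ i) ∧
  (∀ j, ∃ i, v i j ≠ 0) ∧
  (∀ i, ∃ x : Fin n → ℝ, (∀ j, x j = 1 ∨ x j = -1) ∧ (∑ j, x j * v i j = μ i) ∧
    ∀ i', i' ≠ i → ∑ j, x j * v i' j ≠ μ i')

/-!
Let `x` be a vertex covered by `hᵢ` alone. Flipping the signs of `x` on a nonempty set of
coordinates along which all `xⱼ vᵢⱼ` are positive moves it off `hᵢ`, so the other `k - 1`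
hyperplanes cover the subcube of all such flips except for `x` itself. By the Alon–Füredi theorem
that subcube has dimension at most `k - 1`. The same holds where the `xⱼ vᵢⱼ` are negative, and
these two sets of coordinates make up the support of `vᵢ`.
-/

variable {ι κ R : Type*}

/-- A vertex of the cube `{-1, 1}^κ`, regarded as a point of `R^κ`. -/
def IsCubeVertex [One R] [Neg R] (x : κ → R) : Prop :=
  ∀ j, x j = 1 ∨ x j = -1

section SubsetSums

lemma sum_powerset_filter_mem [DecidableEq κ] [AddCommGroup R] (F : Finset κ → R) (A : Finset κ)
    (j : κ) :
    ∑ S ∈ A.powerset with j ∈ S, F S = ∑ S ∈ A.powerset, F S - ∑ S ∈ (A.erase j).powerset, F S := by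
  have powerset_erase : (A.erase j).powerset = {S ∈ A.powerset | j ∉ S} := by
    ext S
    simp only [Finset.mem_filter, Finset.mem_powerset, Finset.subset_erase]
  rw [powerset_erase, eq_sub_iff_add_eq, Finset.sum_filter_add_sum_filter_not]

variable [CommRing R] (w : ι → κ → R) (c : ι → R)

/-- The alternating sum over a cube annihilates polynomials of degree less than its dimension. Each
affine factor is split into its terms: the term of `j` restricts the sum to the face `j ∈ S`, which
is the difference of two cubes of dimension at least `#A - 1`. -/
lemma sum_powerset_neg_one_pow_card_mul_prod_eq_zero {A : Finset κ} {I : Finset ι}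
    (hIA : I.card < A.card) :
    ∑ S ∈ A.powerset, (-1 : R) ^ S.card * ∏ i ∈ I, (c i + ∑ j ∈ S, w i j) = 0 := by
  induction I using Finset.induction_on generalizing A with
  | empty =>
    have hA : A.Nonempty := Finset.card_pos.1 (by simpa using hIA)
    simpa using congrArg (Int.cast : ℤ → R) (Finset.sum_powerset_neg_one_pow_card_of_nonempty hA)
  | insert i I hi ih =>
    rw [Finset.card_insert_of_notMem hi] at hIA
    set F : Finset κ → R := fun S ↦ (-1) ^ S.card * ∏ i ∈ I, (c i + ∑ j ∈ S, w i j)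
    have sum_cube : ∑ S ∈ A.powerset, F S = 0 := ih (by omega)
    have sum_face : ∀ j ∈ A, ∑ S ∈ A.powerset with j ∈ S, F S = 0 := by
      intro j hj
      have sum_opposite_face : ∑ S ∈ (A.erase j).powerset, F S = 0 :=
        ih (by rw [Finset.card_erase_of_mem hj]; omega)
      rw [sum_powerset_filter_mem, sum_cube, sum_opposite_face, sub_zero]
    calc ∑ S ∈ A.powerset, (-1 : R) ^ S.card * ∏ i ∈ insert i I, (c i + ∑ j ∈ S, w i j)
        = ∑ S ∈ A.powerset, (c i * F S + ∑ j ∈ A, if j ∈ S then w i j * F S else 0) := by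
          refine Finset.sum_congr rfl fun S hS ↦ ?_
          rw [Finset.prod_insert hi, ← Finset.sum_filter, Finset.filter_mem_eq_inter,
            Finset.inter_eq_right.2 (Finset.mem_powerset.1 hS), ← Finset.sum_mul]
          ring
      _ = c i * ∑ S ∈ A.powerset, F S
            + ∑ j ∈ A, w i j * ∑ S ∈ A.powerset with j ∈ S, F S := by
          simp only [Finset.sum_add_distrib, Finset.mul_sum, Finset.sum_filter, mul_ite, mul_zero]
          rw [Finset.sum_comm]
      _ = 0 := by
          rw [sum_cube, Finset.sum_eq_zero fun j hj ↦ by rw [sum_face j hj, mul_zero], mul_zero,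
            add_zero]

/-- The Alon–Füredi theorem, with a vertex of `{0, 1}^A` given as the set of its nonzero
coordinates. -/
lemma card_le_card_of_forall_nonempty_exists_add_sum_eq_zero [IsDomain R] {A : Finset κ}
    {I : Finset ι} (empty_uncovered : ∀ i ∈ I, c i ≠ 0)
    (nonempty_covered : ∀ S ⊆ A, S.Nonempty → ∃ i ∈ I, c i + ∑ j ∈ S, w i j = 0) :
    A.card ≤ I.card := by
  by_contra! hIA
  refine (Finset.prod_ne_zero_iff.2 empty_uncovered : ∏ i ∈ I, c i ≠ 0) ?_
  calc ∏ i ∈ I, c i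
      = ∑ S ∈ A.powerset, (-1 : R) ^ S.card * ∏ i ∈ I, (c i + ∑ j ∈ S, w i j) := by
        rw [Finset.sum_eq_single_of_mem ∅ (Finset.empty_mem_powerset A)]
        · simp
        · intro S hS hS_ne
          obtain ⟨i, hi, h_zero⟩ := nonempty_covered S (Finset.mem_powerset.1 hS)
            (Finset.nonempty_iff_ne_empty.2 hS_ne)
          rw [Finset.prod_eq_zero hi h_zero, mul_zero]
    _ = 0 := sum_powerset_neg_one_pow_card_mul_prod_eq_zero w c hIA

end SubsetSums

lemma IsCubeVertex.ne_zero [Ring R] [Nontrivial R] {x : κ → R} (hx : IsCubeVertex x) (j : κ) :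
    x j ≠ 0 := by
  rcases hx j with hj | hj <;> simp [hj]

lemma IsCubeVertex.piecewise_neg [DecidableEq κ] [One R] [InvolutiveNeg R] {x : κ → R}
    (hx : IsCubeVertex x) (S : Finset κ) : IsCubeVertex (S.piecewise (-x) x) := by
  intro j
  by_cases hj : j ∈ S
  · simpa [hj, neg_eq_iff_eq_neg] using (hx j).symm
  · simpa [hj] using hx j

lemma sum_piecewise_neg_mul [CommRing R] [Fintype κ] [DecidableEq κ] (S : Finset κ)
    (x u : κ → R) :
    ∑ j, S.piecewise (-x) x j * u j = ∑ j, x j * u j + ∑ j ∈ S, -2 * (x j * u j) := by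
  calc ∑ j, S.piecewise (-x) x j * u j
      = ∑ j, (x j * u j + if j ∈ S then -2 * (x j * u j) else 0) := by
        refine Finset.sum_congr rfl fun j _ ↦ ?_
        rw [Finset.piecewise, Pi.neg_apply]
        split_ifs <;> ring
    _ = ∑ j, x j * u j + ∑ j ∈ S, -2 * (x j * u j) := by
        rw [Finset.sum_add_distrib, ← Finset.sum_filter, Finset.filter_univ_mem]

section Cover

variable [Fintype ι] [Fintype κ] [CommRing R] {v : ι → κ → R} {μ : ι → R} {i : ι} {x : κ → R}

lemma card_lt_card_of_forall_subset_sum_ne_zero [IsDomain R] [NeZero (2 : R)]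
    (cover : ∀ y : κ → R, IsCubeVertex y → ∃ i', ∑ j, y j * v i' j = μ i')
    (hx : IsCubeVertex x) (hxi : ∑ j, x j * v i j = μ i)
    (hx_ne : ∀ i' ≠ i, ∑ j, x j * v i' j ≠ μ i') {A : Finset κ}
    (hA : ∀ S ⊆ A, S.Nonempty → ∑ j ∈ S, x j * v i j ≠ 0) :
    A.card < Fintype.card ι := by
  refine lt_of_le_of_lt ?_ (Finset.card_erase_lt_of_mem (Finset.mem_univ i))
  refine card_le_card_of_forall_nonempty_exists_add_sum_eq_zero
    (fun i' j ↦ -2 * (x j * v i' j)) (fun i' ↦ ∑ j, x j * v i' j - μ i') ?_ ?_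
  · exact fun i' hi' ↦ sub_ne_zero.2 (hx_ne i' (Finset.ne_of_mem_erase hi'))
  · intro S hSA hS
    obtain ⟨i', hi'⟩ := cover _ (hx.piecewise_neg S)
    rw [sum_piecewise_neg_mul] at hi'
    refine ⟨i', Finset.mem_erase.2 ⟨?_, Finset.mem_univ i'⟩, by linear_combination hi'⟩
    rintro rfl
    rw [hxi, add_eq_left, ← Finset.mul_sum] at hi'
    exact hA S hSA hS ((mul_eq_zero.1 hi').resolve_left (neg_ne_zero.2 two_ne_zero))

theorem essential_cover_sparse_normals_general [LinearOrder R] [IsStrictOrderedRing R]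
    (cover : ∀ y : κ → R, IsCubeVertex y → ∃ i', ∑ j, y j * v i' j = μ i')
    (hx : IsCubeVertex x) (hxi : ∑ j, x j * v i j = μ i)
    (hx_ne : ∀ i' ≠ i, ∑ j, x j * v i' j ≠ μ i') :
    (Finset.univ.filter fun j ↦ v i j ≠ 0).card ≤ 2 * (Fintype.card ι - 1) := by
  have card_pos_lt : (Finset.univ.filter fun j ↦ 0 < x j * v i j).card < Fintype.card ι :=
    card_lt_card_of_forall_subset_sum_ne_zero cover hx hxi hx_ne fun S hS hS_nonempty ↦
      (Finset.sum_pos (fun j hj ↦ (Finset.mem_filter.1 (hS hj)).2) hS_nonempty).ne'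
  have card_neg_lt : (Finset.univ.filter fun j ↦ x j * v i j < 0).card < Fintype.card ι :=
    card_lt_card_of_forall_subset_sum_ne_zero cover hx hxi hx_ne fun S hS hS_nonempty ↦
      (Finset.sum_neg (fun j hj ↦ (Finset.mem_filter.1 (hS hj)).2) hS_nonempty).ne
  have support_eq : (Finset.univ.filter fun j ↦ v i j ≠ 0) =
      (Finset.univ.filter fun j ↦ 0 < x j * v i j) ∪
        Finset.univ.filter fun j ↦ x j * v i j < 0 := by
    rw [← Finset.filter_or]
    refine Finset.filter_congr fun j _ ↦ ?_
    rw [or_comm, ← ne_iff_lt_or_gt, mul_ne_zero_iff_left (hx.ne_zero j)]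
  have card_support_le := support_eq ▸ Finset.card_union_le _ _
  omega

end Cover

/-- In an essential cover, every normal vector has fewer than `2k` nonzero coordinates. -/
theorem essential_cover_sparse_normals (n k : ℕ)
    (v : Fin k → Fin n → ℝ) (μ : Fin k → ℝ) (h : IsEssentialCover n k v μ) (i : Fin k) :
    (Finset.univ.filter fun j => v i j ≠ 0).card < 2 * k := by
  obtain ⟨-, cover, -, private_vertex⟩ := h
  obtain ⟨x, hx, hxi, hx_ne⟩ := private_vertex i
  exact (essential_cover_sparse_normals_general cover hx hxi hx_ne).trans_lt
    (by have := i.pos; rw [Fintype.card_fin]; omega)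
end

section
/- There is a constant C > 0 such that the following holds. Let P be a product probability distribution on {−1,1}^n, let σ² > 0 be the variance of Σ_j z_j for z ∼ P, and let A ⊆ {−1,1}^n be an antichain with respect to the coordinatewise partial order. Then Pr_{z∼P}[z ∈ A] ≤ C/σ. -/
open scoped Classical

/-- The probability of the point of `{−1,1}^n` encoded by `x : Fin n → Bool` under the
product distribution whose `j`-th coordinate equals `1` with probability `p j` and `−1`
with probability `1 - p j`. -/
noncomputable def cubeWeight (n : ℕ) (p : Fin n → ℝ) (x : Fin n → Bool) : ℝ :=
  ∏ j, if x j then p j else 1 - p j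

/-- The `±1` vector encoded by `x : Fin n → Bool`. -/
def signVec (n : ℕ) (x : Fin n → Bool) : Fin n → ℝ :=
  fun j => if x j then 1 else -1

/-!
A coordinate equal to `1` with probability `q` is a fair coin with probability `2 min(q, 1 - q)`
and frozen at its likelier value otherwise. Conditionally on the random set `S` of fair coordinates,
`z` is uniform on a subcube of dimension `|S|`, where by Sperner's theorem an antichain has density
at most `C(|S|, ⌊|S|/2⌋) / 2 ^ |S| ≤ (|S| + 1) ^ (-1/2)`. Averaging over `S` with Jensen's
inequality, it remains to see that `𝔼[1 / (|S| + 1)] ≤ 1 / 𝔼|S|`: conditioning on `S \ {i}` gives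
`ℙ(i ∈ S) 𝔼[1 / (|S| + 1)] ≤ 𝔼[1_{i ∈ S} / |S|]`, and the right-hand sides sum to `ℙ(S ≠ ∅) ≤ 1`.
Finally `σ² = 4 ∑ p_j (1 - p_j) ≤ 2 𝔼|S|`.
-/

section

open Finset

lemma two_mul_add_one_mul_centralBinom_sq_le (m : ℕ) :
    (2 * m + 1) * m.centralBinom ^ 2 ≤ 16 ^ m := by
  induction m with
  | zero => simp
  | succ m ih =>
    refine Nat.le_of_mul_le_mul_left (c := (m + 1) ^ 2) ?_ (by positivity)
    calc (m + 1) ^ 2 * ((2 * (m + 1) + 1) * (m + 1).centralBinom ^ 2)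
        = (2 * m + 3) * ((m + 1) * (m + 1).centralBinom) ^ 2 := by ring
      _ = 4 * ((2 * m + 3) * (2 * m + 1)) * ((2 * m + 1) * m.centralBinom ^ 2) := by
          rw [Nat.succ_mul_centralBinom_succ]; ring
      _ ≤ 4 * (4 * (m + 1) ^ 2) * 16 ^ m := by
          refine Nat.mul_le_mul (Nat.mul_le_mul_left 4 ?_) ih
          nlinarith
      _ = (m + 1) ^ 2 * 16 ^ (m + 1) := by ring

lemma centralBinom_succ_eq_two_mul_choose (m : ℕ) :
    (m + 1).centralBinom = 2 * (2 * m + 1).choose m := by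
  rw [Nat.centralBinom, mul_add_one, Nat.choose_succ_succ, Nat.choose_symm_half, ← two_mul]

lemma add_one_mul_choose_half_sq_le (k : ℕ) : (k + 1) * k.choose (k / 2) ^ 2 ≤ 4 ^ k := by
  rcases Nat.even_or_odd' k with ⟨m, rfl | rfl⟩
  · rw [Nat.mul_div_cancel_left m two_pos, pow_mul]
    exact two_mul_add_one_mul_centralBinom_sq_le m
  · have sq_le := two_mul_add_one_mul_centralBinom_sq_le (m + 1)
    have half : (2 * m + 1) / 2 = m := by lia
    have pow_eq : 16 ^ (m + 1) = 4 * 4 ^ (2 * m + 1) := by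
      rw [show 16 = 4 ^ 2 by norm_num, ← pow_mul]; ring
    rw [centralBinom_succ_eq_two_mul_choose, pow_eq] at sq_le
    rw [half]
    nlinarith [sq_nonneg ((2 * m + 1).choose m)]

lemma sq_choose_half_div_two_pow_le (k : ℕ) :
    ((k.choose (k / 2) : ℝ) / 2 ^ k) ^ 2 ≤ 1 / (k + 1) := by
  have sq_le : ((k : ℝ) + 1) * k.choose (k / 2) ^ 2 ≤ 4 ^ k := by
    exact_mod_cast add_one_mul_choose_half_sq_le k
  rw [div_pow, pow_right_comm, div_le_div_iff₀ (by positivity) (by positivity),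
    show (2 : ℝ) ^ 2 = 4 by norm_num]
  linarith

section RandomSubset

variable {ι : Type*} [Fintype ι] [DecidableEq ι] {a : ι → ℝ}

/-- The probability that the random subset of `ι` containing each `i` independently with
probability `a i` is equal to `S`. -/
def subsetWeight (a : ι → ℝ) (S : Finset ι) : ℝ :=
  (∏ i ∈ S, a i) * ∏ i ∈ Sᶜ, (1 - a i)

lemma subsetWeight_nonneg (ha₀ : ∀ i, 0 ≤ a i) (ha₁ : ∀ i, a i ≤ 1) (S : Finset ι) :
    0 ≤ subsetWeight a S :=
  mul_nonneg (prod_nonneg fun i _ => ha₀ i) (prod_nonneg fun i _ => sub_nonneg.2 (ha₁ i))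

lemma prod_mixture_eq_sum_subsetWeight (a f g : ι → ℝ) :
    ∏ i, (a i * f i + (1 - a i) * g i) =
      ∑ S, subsetWeight a S * ((∏ i ∈ S, f i) * ∏ i ∈ Sᶜ, g i) := by
  simp only [Fintype.prod_add, prod_mul_distrib, subsetWeight, mul_mul_mul_comm]

lemma sum_subsetWeight (a : ι → ℝ) : ∑ S, subsetWeight a S = 1 := by
  simpa using (prod_mixture_eq_sum_subsetWeight a 1 1).symm

lemma mul_subsetWeight_eq_mul_subsetWeight_insert (a : ι → ℝ) {i : ι} {T : Finset ι}
    (hi : i ∉ T) : a i * subsetWeight a T = (1 - a i) * subsetWeight a (insert i T) := by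
  have compl_prod : ∏ j ∈ Tᶜ, (1 - a j) = (1 - a i) * ∏ j ∈ (insert i T)ᶜ, (1 - a j) := by
    rw [compl_insert, mul_prod_erase _ (fun j => 1 - a j) (mem_compl.2 hi)]
  rw [subsetWeight, subsetWeight, compl_prod, prod_insert hi]
  ring

lemma sum_eq_sum_erase_add_insert {M : Type*} [AddCommMonoid M] (f : Finset ι → M) (i : ι) :
    ∑ S, f S = ∑ T ∈ (univ.erase i).powerset, (f T + f (insert i T)) := by
  rw [← powerset_univ, ← insert_erase (mem_univ i), sum_powerset_insert (notMem_erase i univ),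
    erase_insert (notMem_erase i univ), sum_add_distrib]

lemma mul_sum_subsetWeight_div_card_add_one_le (ha₀ : ∀ i, 0 ≤ a i) (ha₁ : ∀ i, a i ≤ 1)
    (i : ι) :
    a i * ∑ S, subsetWeight a S / (#S + 1) ≤
      ∑ S, if i ∈ S then subsetWeight a S / #S else 0 := by
  rw [mul_sum, sum_eq_sum_erase_add_insert _ i, sum_eq_sum_erase_add_insert _ i]
  refine sum_le_sum fun T hT => ?_
  have hi : i ∉ T := fun h => notMem_erase i univ (mem_powerset.1 hT h)
  set w := subsetWeight a (insert i T) with hw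
  have w_nonneg : 0 ≤ w := subsetWeight_nonneg ha₀ ha₁ _
  rw [if_neg hi, if_pos (mem_insert_self i T), card_insert_of_notMem hi, zero_add]
  push_cast
  calc a i * (subsetWeight a T / (#T + 1)) + a i * (w / (#T + 1 + 1))
      = (1 - a i) * w / (#T + 1) + a i * w / (#T + 1 + 1) := by
        rw [hw, ← mul_subsetWeight_eq_mul_subsetWeight_insert a hi]; ring
    _ ≤ (1 - a i) * w / (#T + 1) + a i * w / (#T + 1) := by
        have := mul_nonneg (ha₀ i) w_nonneg
        gcongr
        linarith
    _ = w / (#T + 1) := by ring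

lemma sum_mul_sum_subsetWeight_div_card_add_one_le_one (ha₀ : ∀ i, 0 ≤ a i)
    (ha₁ : ∀ i, a i ≤ 1) : (∑ i, a i) * ∑ S, subsetWeight a S / (#S + 1) ≤ 1 := by
  calc (∑ i, a i) * ∑ S, subsetWeight a S / (#S + 1)
      ≤ ∑ i, ∑ S, if i ∈ S then subsetWeight a S / #S else 0 := by
        rw [sum_mul]
        exact sum_le_sum fun i _ => mul_sum_subsetWeight_div_card_add_one_le ha₀ ha₁ i
    _ = ∑ S, #S * (subsetWeight a S / #S) := by
        rw [sum_comm]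
        simp only [sum_ite_mem, univ_inter, sum_const, nsmul_eq_mul]
    _ ≤ ∑ S, subsetWeight a S :=
        sum_le_sum fun S _ => (mul_div_left_comm _ _ _).trans_le <|
          mul_le_of_le_one_right (subsetWeight_nonneg ha₀ ha₁ S) (div_self_le_one _)
    _ = 1 := sum_subsetWeight a

end RandomSubset

section Subcube

variable {ι : Type*} [Fintype ι] [DecidableEq ι]

/-- The subcube of `ι → Bool` through `m` whose free coordinates are those in `S`. -/
def subcube (m : ι → Bool) (S : Finset ι) : Finset (ι → Bool) :=
  {x | ∀ i ∈ Sᶜ, x i = m i}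

lemma mem_subcube {m x : ι → Bool} {S : Finset ι} : x ∈ subcube m S ↔ ∀ i ∈ Sᶜ, x i = m i := by
  simp only [subcube, mem_filter_univ]

lemma le_of_mem_subcube {m x y : ι → Bool} {S : Finset ι} (hx : x ∈ subcube m S)
    (hy : y ∈ subcube m S) (h : ∀ i ∈ S, x i ≤ y i) : x ≤ y := by
  intro i
  by_cases hi : i ∈ S
  · exact h i hi
  · rw [mem_subcube.1 hx i (mem_compl.2 hi), mem_subcube.1 hy i (mem_compl.2 hi)]

lemma card_inter_subcube_le_choose {A : Finset (ι → Bool)}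
    (hA : IsAntichain (· ≤ ·) (A : Set (ι → Bool))) (m : ι → Bool) (S : Finset ι) :
    #(A ∩ subcube m S) ≤ (#S).choose (#S / 2) := by
  let trueSet (x : ι → Bool) : Finset S := {i | x i = true}
  have le_of_trueSet_subset : ∀ x ∈ A ∩ subcube m S, ∀ y ∈ A ∩ subcube m S,
      trueSet x ⊆ trueSet y → x ≤ y := by
    intro x hx y hy hxy
    refine le_of_mem_subcube (mem_inter.1 hx).2 (mem_inter.1 hy).2 fun i hi hxi => ?_
    have : (⟨i, hi⟩ : S) ∈ trueSet y := hxy (by simpa [trueSet] using hxi)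
    simpa [trueSet] using this
  have trueSet_injOn : Set.InjOn trueSet (A ∩ subcube m S : Finset (ι → Bool)) := by
    intro x hx y hy hxy
    exact le_antisymm (le_of_trueSet_subset x hx y hy hxy.le)
      (le_of_trueSet_subset y hy x hx hxy.ge)
  have trueSet_antichain : IsAntichain (· ⊆ ·)
      (((A ∩ subcube m S).image trueSet : Finset (Finset S)) : Set (Finset S)) := by
    rw [coe_image]
    rintro _ ⟨x, hx, rfl⟩ _ ⟨y, hy, rfl⟩ hne hxy
    exact hne (congrArg trueSet
      (hA.eq (mem_inter.1 hx).1 (mem_inter.1 hy).1 (le_of_trueSet_subset x hx y hy hxy)))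
  simpa only [card_image_of_injOn trueSet_injOn, Fintype.card_coe] using trueSet_antichain.sperner

lemma sq_card_inter_subcube_div_two_pow_le {A : Finset (ι → Bool)}
    (hA : IsAntichain (· ≤ ·) (A : Set (ι → Bool))) (m : ι → Bool) (S : Finset ι) :
    ((#(A ∩ subcube m S) : ℝ) / 2 ^ #S) ^ 2 ≤ 1 / (#S + 1) := by
  refine le_trans ?_ (sq_choose_half_div_two_pow_le #S)
  gcongr
  exact card_inter_subcube_le_choose hA m S

end Subcube

/-- The largest weight that a fair coin can have in a mixture giving the Bernoulli distribution of
parameter `q`. -/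
noncomputable def fairMass (q : ℝ) : ℝ :=
  2 * min q (1 - q)

/-- The likelier value of a Bernoulli variable of parameter `q` (`true` in case of a tie). -/
noncomputable def likelierValue (q : ℝ) : Bool :=
  decide (1 / 2 ≤ q)

lemma fairMass_nonneg {q : ℝ} (h₀ : 0 ≤ q) (h₁ : q ≤ 1) : 0 ≤ fairMass q :=
  mul_nonneg zero_le_two (le_min h₀ (sub_nonneg.2 h₁))

lemma fairMass_le_one (q : ℝ) : fairMass q ≤ 1 := by
  rw [fairMass]
  linarith [min_le_left q (1 - q), min_le_right q (1 - q)]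

lemma two_mul_mul_one_sub_le_fairMass {q : ℝ} (h₀ : 0 ≤ q) (h₁ : q ≤ 1) :
    2 * (q * (1 - q)) ≤ fairMass q := by
  refine mul_le_mul_of_nonneg_left (le_min ?_ ?_) zero_le_two <;> nlinarith

lemma bernoulli_eq_mixture (q : ℝ) (b : Bool) :
    (if b then q else 1 - q) =
      fairMass q * 2⁻¹ + (1 - fairMass q) * if b = likelierValue q then 1 else 0 := by
  rcases le_or_gt (1 / 2) q with hq | hq
  · rw [fairMass, likelierValue, min_eq_right (by linarith), decide_eq_true hq]
    cases b <;> simp only [Bool.false_eq_true, ↓reduceIte] <;> ring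
  · rw [fairMass, likelierValue, min_eq_left (by linarith), decide_eq_false hq.not_ge]
    cases b <;> simp only [Bool.false_eq_true, Bool.true_eq_false, ↓reduceIte] <;> ring

section CubeWeight

variable {n : ℕ}

lemma cubeWeight_eq_sum_subsetWeight (p : Fin n → ℝ) (x : Fin n → Bool) :
    cubeWeight n p x = ∑ S, subsetWeight (fairMass ∘ p) S *
      if x ∈ subcube (likelierValue ∘ p) S then (2 ^ #S)⁻¹ else 0 := by
  rw [cubeWeight, prod_congr rfl fun j _ => bernoulli_eq_mixture (p j) (x j)]
  refine (prod_mixture_eq_sum_subsetWeight (fairMass ∘ p) _ _).trans (sum_congr rfl fun S _ => ?_)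
  simp only [prod_const, one_pow, prod_ite_zero, mem_subcube, Function.comp_apply, inv_pow,
    mul_ite, mul_one, mul_zero]

lemma sum_cubeWeight_eq_sum_subsetWeight (p : Fin n → ℝ) (A : Finset (Fin n → Bool)) :
    ∑ x ∈ A, cubeWeight n p x = ∑ S, subsetWeight (fairMass ∘ p) S *
      (#(A ∩ subcube (likelierValue ∘ p) S) / 2 ^ #S) := by
  simp only [cubeWeight_eq_sum_subsetWeight p]
  rw [sum_comm]
  simp only [← mul_sum, sum_ite_mem, sum_const, nsmul_eq_mul, div_eq_mul_inv]

lemma sq_sum_cubeWeight_mul_sum_fairMass_le_one {p : Fin n → ℝ} (hp₀ : ∀ j, 0 ≤ p j)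
    (hp₁ : ∀ j, p j ≤ 1) {A : Finset (Fin n → Bool)}
    (hA : IsAntichain (· ≤ ·) (A : Set (Fin n → Bool))) :
    (∑ x ∈ A, cubeWeight n p x) ^ 2 * ∑ j, fairMass (p j) ≤ 1 := by
  have fair_nonneg (j : Fin n) : 0 ≤ (fairMass ∘ p) j := fairMass_nonneg (hp₀ j) (hp₁ j)
  have fair_le_one (j : Fin n) : (fairMass ∘ p) j ≤ 1 := fairMass_le_one (p j)
  have weight_nonneg := subsetWeight_nonneg fair_nonneg fair_le_one
  have sq_le : (∑ x ∈ A, cubeWeight n p x) ^ 2 ≤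
      ∑ S, subsetWeight (fairMass ∘ p) S / (#S + 1) := by
    rw [sum_cubeWeight_eq_sum_subsetWeight]
    refine (Real.pow_arith_mean_le_arith_mean_pow_of_even univ _ _ (fun S _ => weight_nonneg S)
      (sum_subsetWeight _) even_two).trans (sum_le_sum fun S _ => ?_)
    rw [div_eq_mul_one_div (subsetWeight _ _)]
    exact mul_le_mul_of_nonneg_left (sq_card_inter_subcube_div_two_pow_le hA _ S)
      (weight_nonneg S)
  calc (∑ x ∈ A, cubeWeight n p x) ^ 2 * ∑ j, fairMass (p j)
      ≤ (∑ S, subsetWeight (fairMass ∘ p) S / (#S + 1)) * ∑ j, fairMass (p j) :=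
        mul_le_mul_of_nonneg_right sq_le (sum_nonneg fun j _ => fair_nonneg j)
    _ ≤ 1 := by
        rw [mul_comm]
        exact sum_mul_sum_subsetWeight_div_card_add_one_le_one fair_nonneg fair_le_one

lemma sum_cubeWeight_succ_mul (p : Fin (n + 1) → ℝ) (f : (Fin (n + 1) → Bool) → ℝ) :
    ∑ x, cubeWeight (n + 1) p x * f x =
      p 0 * ∑ y, cubeWeight n (Fin.tail p) y * f (Fin.cons true y) +
        (1 - p 0) * ∑ y, cubeWeight n (Fin.tail p) y * f (Fin.cons false y) := by
  rw [← (Fin.consEquiv fun _ => Bool).sum_comp, Fintype.sum_prod_type, Fintype.sum_bool]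
  simp [Fin.consEquiv, cubeWeight, Fin.prod_univ_succ, Fin.tail, mul_sum, mul_assoc]

lemma sum_signVec_cons (b : Bool) (y : Fin n → Bool) :
    ∑ j, signVec (n + 1) (Fin.cons b y) j = (if b then 1 else -1) + ∑ j, signVec n y j := by
  simp [signVec, Fin.sum_univ_succ]

lemma sum_cubeWeight (p : Fin n → ℝ) : ∑ x, cubeWeight n p x = 1 := by
  induction n with
  | zero => simp [cubeWeight]
  | succ n ih =>
    have step := sum_cubeWeight_succ_mul p 1
    simp only [Pi.one_apply, mul_one, ih] at step
    rw [step]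
    ring

lemma sum_cubeWeight_mul_sum_signVec (p : Fin n → ℝ) :
    ∑ x, cubeWeight n p x * ∑ j, signVec n x j = ∑ j, (2 * p j - 1) := by
  induction n with
  | zero => simp
  | succ n ih =>
    simp only [sum_cubeWeight_succ_mul, sum_signVec_cons, mul_add, sum_add_distrib, ← sum_mul,
      sum_cubeWeight, ih, Fin.sum_univ_succ (fun j => 2 * p j - 1), Fin.tail,
      Bool.false_eq_true, ↓reduceIte]
    ring

lemma sum_cubeWeight_mul_sum_signVec_sq (p : Fin n → ℝ) :
    ∑ x, cubeWeight n p x * (∑ j, signVec n x j) ^ 2 =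
      4 * ∑ j, p j * (1 - p j) + (∑ j, (2 * p j - 1)) ^ 2 := by
  induction n with
  | zero => simp
  | succ n ih =>
    have shifted (q : Fin n → ℝ) (c : ℝ) :
        ∑ y, cubeWeight n q y * (c + ∑ j, signVec n y j) ^ 2 =
          c ^ 2 + 2 * c * ∑ j, (2 * q j - 1) +
            (4 * ∑ j, q j * (1 - q j) + (∑ j, (2 * q j - 1)) ^ 2) := by
      rw [← ih q, ← sum_cubeWeight_mul_sum_signVec q, ← mul_one (c ^ 2), ← sum_cubeWeight q,
        mul_sum, mul_sum, ← sum_add_distrib, ← sum_add_distrib]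
      exact sum_congr rfl fun y _ => by ring
    simp only [sum_cubeWeight_succ_mul, sum_signVec_cons, shifted,
      Fin.sum_univ_succ (fun j => 2 * p j - 1), Fin.sum_univ_succ (fun j => p j * (1 - p j)),
      Fin.tail, Bool.false_eq_true, ↓reduceIte]
    ring

lemma variance_sum_signVec (p : Fin n → ℝ) :
    (∑ x, cubeWeight n p x * (∑ j, signVec n x j) ^ 2) -
      (∑ x, cubeWeight n p x * ∑ j, signVec n x j) ^ 2 = 4 * ∑ j, p j * (1 - p j) := by
  rw [sum_cubeWeight_mul_sum_signVec, sum_cubeWeight_mul_sum_signVec_sq, add_sub_cancel_right]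

lemma signVec_le_signVec_iff {x y : Fin n → Bool} : signVec n x ≤ signVec n y ↔ x ≤ y := by
  refine forall_congr' fun j => ?_
  cases hx : x j <;> cases hy : y j <;> norm_num [signVec, hx, hy]

lemma isAntichain_image_signVec_iff {A : Set (Fin n → Bool)} :
    IsAntichain (· ≤ ·) (signVec n '' A) ↔ IsAntichain (· ≤ ·) A :=
  IsAntichain.image_embedding_iff
    (φ := OrderEmbedding.ofMapLEIff (signVec n) fun _ _ => signVec_le_signVec_iff)

end CubeWeight

end

/-- Antichains have small mass under product distributions on the cube: there is a constant
`C > 0` such that for every product distribution `P` on `{−1,1}^n`, if `σ²` is the variance of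
`Σ_j z_j` for `z ∼ P` and `σ² > 0`, then every antichain `A` (for the coordinatewise order)
satisfies `Pr_{z∼P}[z ∈ A] ≤ C/σ`. -/
theorem antichain_product_measure :
    ∃ C : ℝ, 0 < C ∧
      ∀ (n : ℕ) (p : Fin n → ℝ), (∀ j, 0 ≤ p j ∧ p j ≤ 1) →
        ∀ σ2 : ℝ,
          σ2 = (∑ x : Fin n → Bool, cubeWeight n p x * (∑ j, signVec n x j) ^ 2) -
              (∑ x : Fin n → Bool, cubeWeight n p x * (∑ j, signVec n x j)) ^ 2 →
          0 < σ2 →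
          ∀ A : Finset (Fin n → Bool),
            IsAntichain (· ≤ ·) ((A.image (signVec n) : Finset (Fin n → ℝ)) : Set (Fin n → ℝ)) →
            ∑ x ∈ A, cubeWeight n p x ≤ C / Real.sqrt σ2 := by
  refine ⟨√2, by positivity, fun n p hp σ2 hσ hpos A hA => ?_⟩
  have antichain : IsAntichain (· ≤ ·) (A : Set (Fin n → Bool)) := by
    rwa [Finset.coe_image, isAntichain_image_signVec_iff] at hA
  have variance_le : σ2 ≤ 2 * ∑ j, fairMass (p j) := by
    rw [hσ, variance_sum_signVec, Finset.mul_sum, Finset.mul_sum]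
    refine Finset.sum_le_sum fun j _ => ?_
    linarith [two_mul_mul_one_sub_le_fairMass (hp j).1 (hp j).2]
  have sq_mul_le := sq_sum_cubeWeight_mul_sum_fairMass_le_one (fun j => (hp j).1)
    (fun j => (hp j).2) antichain
  rw [← Real.sqrt_div zero_le_two]
  refine Real.le_sqrt_of_sq_le ((le_div_iff₀ hpos).2 ?_)
  calc (∑ x ∈ A, cubeWeight n p x) ^ 2 * σ2
      ≤ (∑ x ∈ A, cubeWeight n p x) ^ 2 * (2 * ∑ j, fairMass (p j)) := by gcongr
    _ ≤ 2 := by linarith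
end
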